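/- Let d ≥ 1 be an integer, δ ∈ (0, 1], γ > 0, and σ a real number. Suppose k₁, k₂ are natural numbers such that (1 − δ)^{(p_d)^{k₁}} ≤ γ and (2γ)^{(d+1)^{k₂}} ≤ 2^{1−σ}. Then for every real m with δ ≤ |m| ≤ 1, |g_d^{(k₁+k₂)}(m) − sgn(m)| ≤ 2^{−σ}. -/

import Mathlib

noncomputable def g (d : ℕ) : ℝ → ℝ :=
  fun m => ∑ i ∈ Finset.range (d + 1),
    (1 / 4 ^ i : ℝ) * (Nat.choose (2 * i) i) * (m * (1 - m ^ 2) ^ i)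

noncomputable def p (d : ℕ) : ℝ :=
  ∑ i ∈ Finset.range (d + 1), (1 / 4 ^ i : ℝ) * (Nat.choose (2 * i) i)

noncomputable def sgn (m : ℝ) : ℝ :=
  if m > 0 then 1 else if m = 0 then 0 else -1


/-!
The coefficients are such that `g d` is the odd polynomial with `g d 1 = 1` and derivative
`p d * (1 - x ^ 2) ^ d`. On `[0, 1]` the error `1 - x` therefore obeys two bounds under one step:

* `1 - g d x ≤ (1 - x) ^ p d`. The derivative of `g d x + (1 - x) ^ p d` has the sign of
  `(d + 1 - p d) * log (1 - x) + d * log (1 + x)`, which is concave and vanishes at `0`, so it can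
  only change from nonnegative to negative. Hence `g d x + (1 - x) ^ p d` is at
  least its common value `1` at the endpoints.
* `2 * (1 - g d x) ≤ (2 * (1 - x)) ^ (d + 1)`, by comparing derivatives, as `p d ≤ d + 1`.

Both have the form `e (f x) ≤ e x ^ q`, which iterates to `e (f^[k] x) ≤ e x ^ q ^ k`. The first
bound brings the error from `1 - δ` down to `γ`, the second from `γ` down to `2 ^ (-σ)`.
-/

open Set

section General

theorem iterate_le_rpow_pow {α : Type*} {f : α → α} {s : Set α} {e : α → ℝ} {q : ℝ}
    (hf : MapsTo f s s) (he : ∀ x ∈ s, 0 ≤ e x) (hq : 0 ≤ q) (hstep : ∀ x ∈ s, e (f x) ≤ e x ^ q)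
    (k : ℕ) {x : α} (hx : x ∈ s) : e (f^[k] x) ≤ e x ^ q ^ k := by
  induction k with
  | zero => simp
  | succ k ih =>
    have hxk : f^[k] x ∈ s := hf.iterate k hx
    calc e (f^[k + 1] x) = e (f (f^[k] x)) := by rw [Function.iterate_succ_apply']
      _ ≤ e (f^[k] x) ^ q := hstep _ hxk
      _ ≤ (e x ^ q ^ k) ^ q := Real.rpow_le_rpow (he _ hxk) ih hq
      _ = e x ^ q ^ (k + 1) := by rw [← Real.rpow_mul (he x hx), pow_succ]

theorem min_le_of_hasDerivAt_of_sign_change {f f' : ℝ → ℝ} {a b x : ℝ}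
    (hf : ContinuousOn f (Icc a b)) (hf' : ∀ y ∈ Ioo a b, HasDerivAt f (f' y) y)
    (hsign : ∀ y ∈ Ioo a b, ∀ z ∈ Ioo a b, y ≤ z → 0 ≤ f' z → 0 ≤ f' y) (hx : x ∈ Icc a b) :
    min (f a) (f b) ≤ f x := by
  rcases hx.1.eq_or_lt with rfl | hax
  · exact min_le_left _ _
  rcases hx.2.eq_or_lt with rfl | hxb
  · exact min_le_right _ _
  rcases le_or_gt 0 (f' x) with hpos | hneg
  · have hmono : MonotoneOn f (Icc a x) := by
      refine monotoneOn_of_hasDerivWithinAt_nonneg (f' := f') (convex_Icc a x)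
        (hf.mono (Icc_subset_Icc_right hx.2)) ?_ ?_ <;> rw [interior_Icc] <;> intro y hy
      · exact (hf' y ⟨hy.1, hy.2.trans hxb⟩).hasDerivWithinAt
      · exact hsign y ⟨hy.1, hy.2.trans hxb⟩ x ⟨hax, hxb⟩ hy.2.le hpos
    exact min_le_of_left_le (hmono (left_mem_Icc.2 hx.1) (right_mem_Icc.2 hx.1) hx.1)
  · have hanti : AntitoneOn f (Icc x b) := by
      refine antitoneOn_of_hasDerivWithinAt_nonpos (f' := f') (convex_Icc x b)
        (hf.mono (Icc_subset_Icc_left hx.1)) ?_ ?_ <;> rw [interior_Icc] <;> intro y hy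
      · exact (hf' y ⟨hax.trans hy.1, hy.2⟩).hasDerivWithinAt
      · by_contra! hy_pos
        exact hneg.not_ge (hsign x ⟨hax, hxb⟩ y ⟨hax.trans hy.1, hy.2⟩ hy.1.le hy_pos.le)
    exact min_le_of_right_le (hanti (left_mem_Icc.2 hx.2) (right_mem_Icc.2 hx.2) hx.2)

theorem concaveOn_mul_log_one_sub_add_mul_log_one_add {a b : ℝ} (ha : 0 ≤ a) (hb : 0 ≤ b) :
    ConcaveOn ℝ (Ioo (-1) 1) fun x : ℝ ↦ a * Real.log (1 - x) + b * Real.log (1 + x) := by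
  have hlog := strictConcaveOn_log_Ioi.concaveOn
  have hsub : ConcaveOn ℝ (Ioo (-1) 1) fun x : ℝ ↦ Real.log (1 - x) :=
    (hlog.comp_affineMap (AffineMap.const ℝ ℝ 1 - AffineMap.id ℝ ℝ)).subset
      (fun _ hx ↦ sub_pos.2 hx.2) (convex_Ioo _ _)
  have hadd : ConcaveOn ℝ (Ioo (-1) 1) fun x : ℝ ↦ Real.log (1 + x) :=
    (hlog.translate_right 1).subset (fun _ hx ↦ neg_lt_iff_pos_add'.1 hx.1) (convex_Ioo _ _)
  exact (hsub.smul ha).add (hadd.smul hb)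

theorem one_sub_rpow_le_one_sub_sq_rpow_iff {α β x : ℝ} (hx : x ∈ Ioo (-1) 1) :
    (1 - x) ^ α ≤ (1 - x ^ 2) ^ β ↔ 0 ≤ (β - α) * Real.log (1 - x) + β * Real.log (1 + x) := by
  have hsub : 0 < 1 - x := sub_pos.2 hx.2
  have hadd : 0 < 1 + x := by linarith [hx.1]
  rw [show 1 - x ^ 2 = (1 - x) * (1 + x) by ring,
    ← Real.log_le_log_iff (by positivity) (by positivity), Real.log_rpow hsub,
    Real.log_rpow (by positivity), Real.log_mul hsub.ne' hadd.ne', ← sub_nonneg]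
  ring_nf

theorem one_sub_rpow_le_one_sub_sq_rpow_of_le {α β y z : ℝ} (hβ : 0 ≤ β) (hαβ : α ≤ β)
    (hy : 0 ≤ y) (hyz : y ≤ z) (hz : z < 1) (h : (1 - z) ^ α ≤ (1 - z ^ 2) ^ β) :
    (1 - y) ^ α ≤ (1 - y ^ 2) ^ β := by
  have hzI : z ∈ Ioo (-1) 1 := ⟨by linarith, hz⟩
  rw [one_sub_rpow_le_one_sub_sq_rpow_iff hzI] at h
  rw [one_sub_rpow_le_one_sub_sq_rpow_iff ⟨by linarith, by linarith⟩]
  have hconcave := concaveOn_mul_log_one_sub_add_mul_log_one_add (sub_nonneg.2 hαβ) hβ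
  have hmin := hconcave.min_le_of_mem_Icc (by norm_num : (0 : ℝ) ∈ Ioo (-1) 1) hzI ⟨hy, hyz⟩
  exact (le_min (by simp) h).trans hmin

theorem hasDerivAt_one_sub_rpow {q x : ℝ} (hx : x ≠ 1) :
    HasDerivAt (fun y : ℝ ↦ (1 - y) ^ q) (-(q * (1 - x) ^ (q - 1))) x := by
  simpa using ((hasDerivAt_id' x).const_sub 1).rpow_const (p := q) (Or.inl (sub_ne_zero.2 hx.symm))

theorem hasDerivAt_mul_one_sub_sq_pow_succ (n : ℕ) (x : ℝ) :
    HasDerivAt (fun y : ℝ ↦ y * (1 - y ^ 2) ^ (n + 1))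
      ((2 * n + 3) * (1 - x ^ 2) ^ (n + 1) - (2 * n + 2) * (1 - x ^ 2) ^ n) x := by
  have hsq : HasDerivAt (fun y : ℝ ↦ 1 - y ^ 2) (-(2 * x)) x := by
    simpa using (hasDerivAt_pow 2 x).const_sub 1
  refine ((hasDerivAt_id' x).mul (hsq.pow (n + 1))).congr_deriv ?_
  simp only [Pi.pow_apply, Nat.cast_add, Nat.cast_one, add_tsub_cancel_right]
  ring

end General

section Coefficients

/-- The coefficient `C(2i, i) / 4 ^ i` of `y ^ i` in the power series of `(1 - y) ^ (-1 / 2)`; these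
are the weights in the definitions of `g` and `p`. -/
noncomputable def normalizedCentralBinom (i : ℕ) : ℝ :=
  (1 / 4 ^ i : ℝ) * (Nat.choose (2 * i) i)

theorem normalizedCentralBinom_pos (i : ℕ) : 0 < normalizedCentralBinom i :=
  mul_pos (by positivity) (Nat.cast_pos.2 i.centralBinom_pos)

theorem normalizedCentralBinom_le_one (i : ℕ) : normalizedCentralBinom i ≤ 1 := by
  have h : ((2 * i).choose i : ℝ) ≤ 4 ^ i := by
    exact_mod_cast Nat.centralBinom_le_four_pow i
  rw [normalizedCentralBinom, one_div, inv_mul_le_iff₀ (by positivity), mul_one]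
  exact h

theorem succ_mul_normalizedCentralBinom_succ (i : ℕ) :
    (2 * i + 2) * normalizedCentralBinom (i + 1) = (2 * i + 1) * normalizedCentralBinom i := by
  have h : ((i : ℝ) + 1) * (2 * (i + 1)).choose (i + 1) = 2 * (2 * i + 1) * (2 * i).choose i := by
    exact_mod_cast Nat.succ_mul_centralBinom_succ i
  unfold normalizedCentralBinom
  rw [pow_succ]
  field_simp
  linarith

theorem p_succ (d : ℕ) : p (d + 1) = p d + normalizedCentralBinom (d + 1) :=
  Finset.sum_range_succ _ _

theorem p_eq_mul_normalizedCentralBinom (d : ℕ) : p d = (2 * d + 1) * normalizedCentralBinom d := by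
  induction d with
  | zero => simp [p, normalizedCentralBinom]
  | succ d ih =>
    rw [p_succ, ih, ← succ_mul_normalizedCentralBinom_succ]
    push_cast
    ring

theorem p_pos (d : ℕ) : 0 < p d :=
  Finset.sum_pos (fun i _ ↦ normalizedCentralBinom_pos i) (by simp)

theorem p_le (d : ℕ) : p d ≤ d + 1 :=
  calc p d ≤ ∑ _i ∈ Finset.range (d + 1), (1 : ℝ) :=
        Finset.sum_le_sum fun i _ ↦ normalizedCentralBinom_le_one i
    _ = d + 1 := by simp

end Coefficients

section Polynomial

variable (d : ℕ)

theorem g_succ (x : ℝ) :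
    g (d + 1) x = g d x + normalizedCentralBinom (d + 1) * (x * (1 - x ^ 2) ^ (d + 1)) :=
  Finset.sum_range_succ _ _

theorem hasDerivAt_g (x : ℝ) : HasDerivAt (g d) (p d * (1 - x ^ 2) ^ d) x := by
  induction d with
  | zero => simpa +unfoldPartialApp [g, p] using hasDerivAt_id' x
  | succ d ih =>
    have hp : p d = (2 * d + 2) * normalizedCentralBinom (d + 1) := by
      rw [p_eq_mul_normalizedCentralBinom, succ_mul_normalizedCentralBinom_succ]
    rw [funext (g_succ d)]
    refine (ih.add ((hasDerivAt_mul_one_sub_sq_pow_succ d x).const_mul _)).congr_deriv ?_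
    rw [p_succ, hp]
    ring

theorem g_one : g d 1 = 1 := by
  simp [g, Finset.sum_range_succ']

theorem odd_g : Function.Odd (g d) := by
  intro x
  simp only [g, neg_sq, neg_mul, mul_neg, Finset.sum_neg_distrib]

theorem monotoneOn_g : MonotoneOn (g d) (Icc (-1) 1) := by
  refine monotoneOn_of_hasDerivWithinAt_nonneg (convex_Icc (-1) 1)
    (fun x _ ↦ (hasDerivAt_g d x).continuousAt.continuousWithinAt)
    (fun x _ ↦ (hasDerivAt_g d x).hasDerivWithinAt) fun x hx ↦ ?_
  have habs : |x| ≤ 1 := abs_le.2 (mem_Icc.1 (interior_subset hx))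
  have hsq : 0 ≤ 1 - x ^ 2 := sub_nonneg.2 ((sq_le_one_iff_abs_le_one x).2 habs)
  have hp : 0 ≤ p d := (p_pos d).le
  positivity

theorem mapsTo_g_Icc_neg_one_one : MapsTo (g d) (Icc (-1) 1) (Icc (-1) 1) := by
  simpa [odd_g d 1, g_one] using (monotoneOn_g d).mapsTo_Icc

theorem mapsTo_g_Icc_zero_one : MapsTo (g d) (Icc 0 1) (Icc 0 1) := by
  have hmono := (monotoneOn_g d).mono (Icc_subset_Icc_left (neg_one_lt_zero (R := ℝ)).le)
  simpa [(odd_g d).map_zero, g_one] using hmono.mapsTo_Icc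

end Polynomial

section OneStep

variable (d : ℕ) {x : ℝ}

theorem one_sub_g_le_rpow (hx : x ∈ Icc 0 1) : 1 - g d x ≤ (1 - x) ^ p d := by
  have hp : 0 < p d := p_pos d
  have hderiv : ∀ y ∈ Ioo (0 : ℝ) 1, HasDerivAt (fun y ↦ g d y + (1 - y) ^ p d)
      (p d * ((1 - y ^ 2) ^ d - (1 - y) ^ (p d - 1))) y := fun y hy ↦
    ((hasDerivAt_g d y).add (hasDerivAt_one_sub_rpow hy.2.ne)).congr_deriv (by ring)
  have hcont : ContinuousOn (fun y ↦ g d y + (1 - y) ^ p d) (Icc 0 1) := by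
    have hg : Continuous (g d) :=
      continuous_iff_continuousAt.2 fun y ↦ (hasDerivAt_g d y).continuousAt
    have hpow : Continuous fun y : ℝ ↦ (1 - y) ^ p d :=
      (continuous_const.sub continuous_id).rpow_const fun _ ↦ Or.inr hp.le
    exact (hg.add hpow).continuousOn
  have hmin := min_le_of_hasDerivAt_of_sign_change hcont hderiv (fun y hy z hz hyz h ↦ ?_) hx
  · simp only [(odd_g d).map_zero, g_one, sub_zero, sub_self, Real.one_rpow, Real.zero_rpow hp.ne',
      zero_add, add_zero, min_self] at hmin
    linarith
  · simp only [mul_nonneg_iff_of_pos_left hp, sub_nonneg, ← Real.rpow_natCast _ d] at h ⊢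
    exact one_sub_rpow_le_one_sub_sq_rpow_of_le d.cast_nonneg (sub_le_iff_le_add.2 (p_le d)) hy.1.le
      hyz hz.2 h

theorem two_mul_one_sub_g_le_pow (hx : x ∈ Icc (-1) 1) :
    2 * (1 - g d x) ≤ (2 * (1 - x)) ^ (d + 1) := by
  have hderiv (y : ℝ) : HasDerivAt (fun y ↦ (2 * (1 - y)) ^ (d + 1) + 2 * g d y)
      (2 * (1 - y) ^ d * (p d * (1 + y) ^ d - (d + 1) * 2 ^ d)) y := by
    have hlin : HasDerivAt (fun y : ℝ ↦ 2 * (1 - y)) (-2) y := by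
      simpa using ((hasDerivAt_id' y).const_sub 1).const_mul 2
    refine ((hlin.pow (d + 1)).add ((hasDerivAt_g d y).const_mul 2)).congr_deriv ?_
    rw [show 1 - y ^ 2 = (1 - y) * (1 + y) by ring]
    simp only [Nat.cast_add, Nat.cast_one, add_tsub_cancel_right, mul_pow]
    ring
  have hanti : AntitoneOn (fun y ↦ (2 * (1 - y)) ^ (d + 1) + 2 * g d y) (Icc (-1) 1) := by
    refine antitoneOn_of_hasDerivWithinAt_nonpos (convex_Icc (-1) 1)
      (fun y _ ↦ (hderiv y).continuousAt.continuousWithinAt)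
      (fun y _ ↦ (hderiv y).hasDerivWithinAt) fun y hy ↦ ?_
    obtain ⟨hy_lower, hy_upper⟩ : y ∈ Icc (-1) 1 := interior_subset hy
    have hsub : 0 ≤ (1 - y) ^ d := pow_nonneg (sub_nonneg.2 hy_upper) d
    have hadd : 0 ≤ 1 + y := by linarith
    have hle : p d * (1 + y) ^ d ≤ (d + 1) * 2 ^ d := by
      gcongr
      · exact p_le d
      · linarith
    exact mul_nonpos_of_nonneg_of_nonpos (mul_nonneg zero_le_two hsub) (sub_nonpos.2 hle)
  have hone := hanti hx (right_mem_Icc.2 (by norm_num)) hx.2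
  simp only [g_one, sub_self, mul_zero, zero_pow d.succ_ne_zero] at hone
  linarith

end OneStep

section Iteration

variable (d : ℕ) {x : ℝ}

theorem one_sub_iterate_g_le_rpow (k : ℕ) (hx : x ∈ Icc 0 1) :
    1 - (g d)^[k] x ≤ (1 - x) ^ p d ^ k :=
  iterate_le_rpow_pow (e := fun y ↦ 1 - y) (mapsTo_g_Icc_zero_one d) (fun _ hy ↦ sub_nonneg.2 hy.2)
    (p_pos d).le (fun _ hy ↦ one_sub_g_le_rpow d hy) k hx

theorem two_mul_one_sub_iterate_g_le_pow (k : ℕ) (hx : x ∈ Icc (-1) 1) :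
    2 * (1 - (g d)^[k] x) ≤ (2 * (1 - x)) ^ (d + 1) ^ k := by
  have h := iterate_le_rpow_pow (e := fun y ↦ 2 * (1 - y)) (q := (d + 1 : ℕ))
    (mapsTo_g_Icc_neg_one_one d) (fun y hy ↦ by linarith [hy.2]) (Nat.cast_nonneg _)
    (fun y hy ↦ by simpa only [Real.rpow_natCast] using two_mul_one_sub_g_le_pow d hy) k hx
  rwa [← Nat.cast_pow, Real.rpow_natCast] at h

theorem two_mul_one_sub_iterate_g_add_le_pow {γ : ℝ} {k₁ : ℕ} (k₂ : ℕ) (hx : x ∈ Icc 0 1)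
    (hγ : (1 - x) ^ p d ^ k₁ ≤ γ) :
    2 * (1 - (g d)^[k₁ + k₂] x) ≤ (2 * γ) ^ (d + 1) ^ k₂ := by
  have hmem : (g d)^[k₁] x ∈ Icc 0 1 := (mapsTo_g_Icc_zero_one d).iterate k₁ hx
  have hstage : 1 - (g d)^[k₁] x ≤ γ := (one_sub_iterate_g_le_rpow d k₁ hx).trans hγ
  calc 2 * (1 - (g d)^[k₁ + k₂] x) = 2 * (1 - (g d)^[k₂] ((g d)^[k₁] x)) := by
        rw [add_comm, Function.iterate_add_apply]
    _ ≤ (2 * (1 - (g d)^[k₁] x)) ^ (d + 1) ^ k₂ :=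
        two_mul_one_sub_iterate_g_le_pow d k₂ ⟨by linarith [hmem.1], hmem.2⟩
    _ ≤ (2 * γ) ^ (d + 1) ^ k₂ := by
        have hnonneg := sub_nonneg.2 hmem.2
        gcongr

theorem odd_iterate_g (k : ℕ) : Function.Odd (g d)^[k] :=
  Function.Commute.iterate_left (g := Neg.neg) (odd_g d) k

theorem abs_iterate_g_sub_sgn (k : ℕ) {m : ℝ} (hm : m ≠ 0) (hm1 : |m| ≤ 1) :
    |(g d)^[k] m - sgn m| = 1 - (g d)^[k] |m| := by
  have hle : (g d)^[k] |m| ≤ 1 := ((mapsTo_g_Icc_zero_one d).iterate k ⟨abs_nonneg m, hm1⟩).2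
  rcases hm.lt_or_gt with hneg | hpos
  · have hsgn : sgn m = -1 := by rw [sgn, if_neg hneg.not_gt, if_neg hm]
    rw [abs_of_neg hneg, odd_iterate_g] at hle ⊢
    rw [hsgn, abs_of_nonneg (by linarith)]
    ring
  · have hsgn : sgn m = 1 := if_pos hpos
    rw [abs_of_pos hpos] at hle ⊢
    rw [hsgn, abs_sub_comm, abs_of_nonneg (by linarith)]

end Iteration

theorem stmt_8 (d : ℕ) (hd : 1 ≤ d) (δ γ σ : ℝ) (hδ0 : 0 < δ) (hδ1 : δ ≤ 1)
    (hγ : 0 < γ) (k₁ k₂ : ℕ)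
    (h1 : (1 - δ) ^ (p d ^ k₁) ≤ γ)
    (h2 : (2 * γ) ^ ((d + 1) ^ k₂) ≤ (2 : ℝ) ^ (1 - σ))
    (m : ℝ) (hm : δ ≤ |m|) (hm1 : |m| ≤ 1) :
    |(g d)^[k₁ + k₂] m - sgn m| ≤ (2 : ℝ) ^ (-σ) := by
  have hm0 : m ≠ 0 := abs_pos.1 (hδ0.trans_le hm)
  have hp : 0 ≤ p d := (p_pos d).le
  have hmγ : (1 - |m|) ^ p d ^ k₁ ≤ γ :=
    (Real.rpow_le_rpow (by linarith) (by linarith) (by positivity)).trans h1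
  have herror := two_mul_one_sub_iterate_g_add_le_pow d k₂ ⟨abs_nonneg m, hm1⟩ hmγ
  have hpow : (2 : ℝ) ^ (1 - σ) = 2 * 2 ^ (-σ) := by
    rw [sub_eq_add_neg, Real.rpow_add two_pos, Real.rpow_one]
  rw [abs_iterate_g_sub_sgn d _ hm0 hm1]
  linarith
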